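/- arXiv:2004.08169 — 2 statements merged into one kernel-verified Lean document; each statement's English description precedes it below -/
import Mathlib

section
/- Let n ≥ 1, μ > 1, and define f : ℝⁿ → ℝ by f(ξ) = Φ_μ(|ξ|). Then f is of class C² and there exist constants c₁, c₂ > 0 (depending only on μ and n) such that for all ξ, η ∈ ℝⁿ: c₁(1+|ξ|)^{−μ}|η|² ≤ D²f(ξ)(η,η) ≤ c₂(1+|ξ|)^{−1}|η|². -/
open Real MeasureTheory

/-- `Φ_μ(t) = (μ-1) ∫₀ᵗ ∫₀ˢ (1+r)^{-μ} dr ds`. -/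
noncomputable def Phi (μ : ℝ) (t : ℝ) : ℝ :=
  (μ - 1) * ∫ s in (0:ℝ)..t, ∫ r in (0:ℝ)..s, (1 + r) ^ (-μ)

/-- The Hessian bilinear form `D²f(ξ)(η,η)` of `f` at `ξ` in direction `η`. -/
noncomputable def hessQ {n : ℕ} (f : EuclideanSpace ℝ (Fin n) → ℝ)
    (ξ η : EuclideanSpace ℝ (Fin n)) : ℝ :=
  fderiv ℝ (fun x => fderiv ℝ f x η) ξ η

section helpers
open Filter Topology

/-- The derivative of Phi. -/
noncomputable def hPhi (μ s : ℝ) : ℝ := 1 - (1 + s) ^ (1 - μ)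

lemma hPhi_deriv (μ s : ℝ) (hs : -1 < s) :
    HasDerivAt (hPhi μ) ((μ - 1) * (1 + s) ^ (-μ)) s := by
  have h1 : HasDerivAt (fun s : ℝ => 1 + s) 1 s := (hasDerivAt_id s).const_add 1
  have h2 := (h1.rpow_const (p := 1 - μ) (Or.inl (by linarith))).const_sub 1
  refine HasDerivAt.congr_deriv (f := hPhi μ) h2 ?_
  rw [show 1 - μ - 1 = -μ by ring]; ring

lemma hPhi_eq (μ s : ℝ) (hμ : 1 < μ) (hs : -1 < s) :
    ∫ r in (0:ℝ)..s, (1 + r) ^ (-μ) = (μ - 1)⁻¹ * hPhi μ s := by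
  have hpos : ∀ r ∈ Set.uIcc 0 s, -1 < r := by
    intro r hr
    rcases Set.mem_uIcc.1 hr with h | h <;> linarith [h.1]
  have := intervalIntegral.integral_eq_sub_of_hasDerivAt (a := 0) (b := s)
    (f := fun s => (μ - 1)⁻¹ * hPhi μ s) (f' := fun r => (1 + r) ^ (-μ)) ?_ ?_
  · rw [this]; simp [hPhi]
  · intro r hr
    have := (hPhi_deriv μ r (hpos r hr)).const_mul (μ - 1)⁻¹
    refine this.congr_deriv ?_
    have : μ - 1 ≠ 0 := by linarith
    field_simp
  · apply ContinuousOn.intervalIntegrable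
    apply ContinuousOn.rpow_const (by fun_prop)
    intro r hr
    left; linarith [hpos r hr]

lemma Phi_deriv (μ t : ℝ) (hμ : 1 < μ) (ht : -1 < t) :
    HasDerivAt (Phi μ) (hPhi μ t) t := by
  have hc : ContinuousOn (hPhi μ) (Set.Ioi (-1)) :=
    fun s hs => (hPhi_deriv μ s hs).continuousAt.continuousWithinAt
  have hsub : ∀ t : ℝ, -1 < t → Set.uIcc 0 t ⊆ Set.Ioi (-1) := by
    intro t ht r hr
    rcases Set.mem_uIcc.1 hr with h | h <;> (simp only [Set.mem_Ioi]; linarith [h.1])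
  have heq : (fun t => ∫ s in (0:ℝ)..t, hPhi μ s) =ᶠ[𝓝 t] Phi μ := by
    filter_upwards [Ioi_mem_nhds ht] with u hu
    unfold Phi
    rw [intervalIntegral.integral_congr (g := fun s => (μ - 1)⁻¹ * hPhi μ s)
      (fun s hs => hPhi_eq μ s hμ (hsub u hu hs)), intervalIntegral.integral_const_mul]
    have : μ - 1 ≠ 0 := by linarith
    field_simp
  refine HasDerivAt.congr_of_eventuallyEq ?_ heq.symm
  apply intervalIntegral.integral_hasDerivAt_right
  · exact (hc.mono (hsub t ht)).intervalIntegrable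
  · exact hc.stronglyMeasurableAtFilter isOpen_Ioi t ht
  · exact (hPhi_deriv μ t ht).continuousAt

/-- `a(t) = h(t)/t` -/
noncomputable def aPhi (μ t : ℝ) : ℝ := dslope (hPhi μ) 0 t

lemma aPhi_zero (μ : ℝ) : aPhi μ 0 = μ - 1 := by
  simp [aPhi, dslope_same, (hPhi_deriv μ 0 (by norm_num)).deriv]

lemma aPhi_ne (μ t : ℝ) (ht : t ≠ 0) : aPhi μ t = hPhi μ t / t := by
  rw [aPhi, dslope_of_ne _ ht, slope_def_field]; simp [hPhi]

lemma aPhi_mul (μ t : ℝ) : aPhi μ t * t = hPhi μ t := by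
  by_cases ht : t = 0
  · simp [ht, hPhi]
  · rw [aPhi_ne _ _ ht]; field_simp

lemma aPhi_deriv (μ t : ℝ) (ht : 0 < t) :
    HasDerivAt (aPhi μ) (((μ - 1) * (1 + t) ^ (-μ) - aPhi μ t) / t) t := by
  have h := (hPhi_deriv μ t (by linarith)).div (hasDerivAt_id t) ht.ne'
  have heq : aPhi μ =ᶠ[𝓝 t] (fun t => hPhi μ t / id t) := by
    filter_upwards [Ioi_mem_nhds ht] with u hu
    exact aPhi_ne μ u (ne_of_gt hu)
  refine (h.congr_of_eventuallyEq heq).congr_deriv ?_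
  rw [aPhi_ne _ _ ht.ne']; simp; field_simp

lemma aPhi_cont (μ t : ℝ) (ht : 0 ≤ t) : ContinuousAt (aPhi μ) t := by
  rcases ht.eq_or_lt with rfl | h
  · exact continuousAt_dslope_same.2 (hPhi_deriv μ 0 (by norm_num)).differentiableAt
  · exact (aPhi_deriv μ t h).continuousAt

lemma aPhi_bound (μ t : ℝ) (hμ : 1 < μ) (ht : 0 ≤ t) :
    (μ - 1) * (1 + t) ^ (-μ) ≤ aPhi μ t ∧ aPhi μ t ≤ μ * (1 + t)⁻¹ := by
  rcases ht.eq_or_lt with rfl | h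
  · rw [aPhi_zero]; simp
  · obtain ⟨c, hc, hc'⟩ := exists_hasDerivAt_eq_slope (hPhi μ)
      (fun s => (μ - 1) * (1 + s) ^ (-μ)) h
      (fun s hs => (hPhi_deriv μ s (by linarith [hs.1])).continuousAt.continuousWithinAt)
      (fun s hs => hPhi_deriv μ s (by linarith [hs.1]))
    have ha : aPhi μ t = (μ - 1) * (1 + c) ^ (-μ) := by
      rw [hc', aPhi_ne _ _ h.ne']; simp [hPhi]
    have h1 : (1 + t) ^ (-μ) ≤ (1 + c) ^ (-μ) :=
      rpow_le_rpow_of_nonpos (by linarith [hc.1]) (by linarith [hc.2]) (by linarith)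
    have h2 : (1 + c) ^ (-μ) ≤ 1 :=
      rpow_le_one_of_one_le_of_nonpos (by linarith [hc.1]) (by linarith)
    have h3 : aPhi μ t ≤ μ - 1 := by rw [ha]; nlinarith
    have h4 : aPhi μ t * t ≤ 1 := by
      rw [aPhi_mul, hPhi]
      linarith [rpow_nonneg (show 0 ≤ 1 + t by linarith) (1 - μ)]
    constructor
    · rw [ha]; nlinarith
    · rw [← div_eq_mul_inv, le_div_iff₀ (by linarith)]; linarith

variable {E : Type*} [NormedAddCommGroup E] [InnerProductSpace ℝ E]

lemma norm_fd (x : E) (hx : x ≠ 0) :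
    HasFDerivAt (fun x : E => ‖x‖) (‖x‖⁻¹ • innerSL ℝ x) x := by
  have h := (hasStrictFDerivAt_norm_sq x).hasFDerivAt.sqrt (by simpa using hx)
  have e : (fun y : E => √(‖y‖ ^ 2)) = fun y => ‖y‖ := by ext; simp
  rw [e] at h
  refine h.congr_fderiv ?_
  ext y; simp; field_simp

lemma f_fd (μ : ℝ) (hμ : 1 < μ) (x : E) :
    HasFDerivAt (fun x : E => Phi μ ‖x‖) (aPhi μ ‖x‖ • innerSL ℝ x) x := by
  by_cases hx : x = 0
  · subst hx
    have h := Phi_deriv μ 0 hμ (by norm_num)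
    rw [hasDerivAt_iff_isLittleO_nhds_zero] at h
    rw [hasFDerivAt_iff_isLittleO_nhds_zero]
    have ht : Tendsto (fun x : E => ‖x‖) (𝓝 0) (𝓝 0) := by
      simpa using (continuous_norm (E := E)).tendsto 0
    have := (h.comp_tendsto ht).norm_right
    refine (this.congr ?_ ?_).of_norm_right
    · intro y; simp [hPhi]
    · intro y; simp
  · have hx' : 0 < ‖x‖ := norm_pos_iff.2 hx
    refine ((Phi_deriv μ ‖x‖ hμ (by linarith)).comp_hasFDerivAt x (norm_fd x hx)).congr_fderiv ?_
    rw [smul_smul, aPhi_ne _ _ hx'.ne', div_eq_mul_inv]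

/-- derivative of `x ↦ a(|x|)⟨x,η⟩` -/
noncomputable def LPhi (μ : ℝ) (η x : E) : E →L[ℝ] ℝ :=
  aPhi μ ‖x‖ • innerSL ℝ η +
    ((((μ - 1) * (1 + ‖x‖) ^ (-μ) - aPhi μ ‖x‖) / ‖x‖ ^ 2) * inner ℝ x η) • innerSL ℝ x

lemma G_fd (μ : ℝ) (η x : E) :
    HasFDerivAt (fun x : E => aPhi μ ‖x‖ * inner ℝ x η) (LPhi μ η x) x := by
  have hi : HasFDerivAt (fun x : E => inner ℝ x η) (innerSL ℝ η) x := by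
    have := (innerSL ℝ η).hasFDerivAt (x := x)
    refine this.congr_of_eventuallyEq (Eventually.of_forall fun y => ?_)
    simp [real_inner_comm]
  by_cases hx : x = 0
  · subst hx
    rw [hasFDerivAt_iff_isLittleO_nhds_zero]
    have ht : Tendsto (fun x : E => aPhi μ ‖x‖ - aPhi μ 0) (𝓝 0) (𝓝 0) := by
      have h1 := (aPhi_cont μ 0 le_rfl).tendsto.comp
        (show Tendsto (fun x : E => ‖x‖) (𝓝 0) (𝓝 0) by
          simpa using (continuous_norm (E := E)).tendsto 0)
      simpa using h1.sub_const (aPhi μ 0)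
    have h3 : (fun x : E => (1:ℝ) * ‖x‖) =O[𝓝 0] (fun x : E => x) := by
      simpa using (Asymptotics.isBigO_refl (fun x : E => x) (𝓝 0)).norm_left
    have h2' : (fun x : E => (aPhi μ ‖x‖ - aPhi μ 0) * innerSL ℝ η x) =o[𝓝 0]
      (fun x : E => (1:ℝ) * ‖x‖) :=
      ((Asymptotics.isLittleO_one_iff ℝ).2 ht).mul_isBigO
      ((innerSL ℝ η).isBigO_id (𝓝 0)).norm_right
    refine (h2'.trans_isBigO h3).congr_left fun y => ?_
    simp [LPhi, real_inner_comm]; ring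
  · have hx' : 0 < ‖x‖ := norm_pos_iff.2 hx
    refine (((aPhi_deriv μ ‖x‖ hx').comp_hasFDerivAt x (norm_fd x hx)).mul hi).congr_fderiv ?_
    ext y
    simp [LPhi]
    field_simp

lemma L_cont (μ : ℝ) (hμ : 1 < μ) (η : E) : Continuous (LPhi μ η) := by
  rw [continuous_iff_continuousAt]
  intro x
  have ha : ContinuousAt (fun x : E => aPhi μ ‖x‖) x :=
    ContinuousAt.comp (f := fun x : E => ‖x‖) (aPhi_cont μ ‖x‖ (norm_nonneg x))
      continuous_norm.continuousAt
  have hr : ContinuousAt (fun x : E => (μ - 1) * (1 + ‖x‖) ^ (-μ) - aPhi μ ‖x‖) x := by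
    refine ContinuousAt.sub (continuousAt_const.mul ?_) ha
    refine ContinuousAt.rpow_const (by fun_prop) (Or.inl ?_)
    have := norm_nonneg x
    positivity
  have hJ : Continuous (fun x : E => innerSL ℝ x) := (innerSL ℝ).continuous
  refine ContinuousAt.add (ha.smul continuousAt_const) ?_
  by_cases hx : x = 0
  · subst hx
    have hr0 := (hr.norm.mul (continuousAt_const (y := ‖η‖))).tendsto
    have e0 : ‖(μ - 1) * (1 + ‖(0 : E)‖) ^ (-μ) - aPhi μ ‖(0 : E)‖‖ * ‖η‖ = 0 := by
      simp [aPhi_zero]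
    replace hr0 := hr0.trans_eq (congrArg 𝓝 e0)
    rw [ContinuousAt]
    rw [inner_zero_left, mul_zero, zero_smul]
    refine squeeze_zero_norm (fun y => ?_) hr0
    rw [norm_smul, norm_mul, norm_div, innerSL_apply_norm]
    by_cases hy : y = 0
    · simp [hy, aPhi_zero]
    have hy' : 0 < ‖y‖ := norm_pos_iff.2 hy
    have := norm_inner_le_norm (𝕜 := ℝ) y η
    rw [norm_pow, norm_norm]
    calc _ ≤ ‖(μ - 1) * (1 + ‖y‖) ^ (-μ) - aPhi μ ‖y‖‖ / ‖y‖ ^ 2 * (‖y‖ * ‖η‖) * ‖y‖ := by gcongr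
      _ = ‖(μ - 1) * (1 + ‖y‖) ^ (-μ) - aPhi μ ‖y‖‖ * ‖η‖ := by field_simp
  · refine ContinuousAt.smul (ContinuousAt.mul (hr.div (by fun_prop) ?_) (by fun_prop))
      hJ.continuousAt
    simpa using hx

lemma L_bound (μ : ℝ) (hμ : 1 < μ) (x η : E) :
    (μ - 1) * (1 + ‖x‖) ^ (-μ) * ‖η‖ ^ 2 ≤ LPhi μ η x η ∧
      LPhi μ η x η ≤ μ * (1 + ‖x‖) ^ (-(1:ℝ)) * ‖η‖ ^ 2 := by
  obtain ⟨h1, h2⟩ := aPhi_bound μ ‖x‖ hμ (norm_nonneg x)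
  rw [rpow_neg_one]
  set a := aPhi μ ‖x‖
  set b := (μ - 1) * (1 + ‖x‖) ^ (-μ)
  have e : LPhi μ η x η = a * ‖η‖ ^ 2 - (a - b) * (inner ℝ x η ^ 2 / ‖x‖ ^ 2) := by
    simp [LPhi, a, b]; ring
  have hq : inner ℝ x η ^ 2 / ‖x‖ ^ 2 ≤ ‖η‖ ^ 2 := by
    apply div_le_of_le_mul₀ (by positivity) (by positivity)
    have := abs_real_inner_le_norm x η
    rw [← mul_pow, mul_comm, ← sq_abs]
    gcongr
  have hq0 : 0 ≤ inner ℝ x η ^ 2 / ‖x‖ ^ 2 := by positivity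
  rw [e]
  constructor
  · nlinarith
  · nlinarith [mul_nonneg (sub_nonneg.2 h1) hq0, mul_le_mul_of_nonneg_right h2 (sq_nonneg ‖η‖)]

end helpers

/-- `f(ξ) = Φ_μ(|ξ|)` is `C²` and satisfies the ellipticity estimate
`c₁(1+|ξ|)^{-μ}|η|² ≤ D²f(ξ)(η,η) ≤ c₂(1+|ξ|)^{-1}|η|²`. -/
theorem Phi_mu_elliptic (n : ℕ) (hn : 1 ≤ n) (μ : ℝ) (hμ : 1 < μ)
    (f : EuclideanSpace ℝ (Fin n) → ℝ) (hf : f = fun ξ => Phi μ ‖ξ‖) :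
    ContDiff ℝ 2 f ∧
    ∃ c₁ c₂ : ℝ, 0 < c₁ ∧ 0 < c₂ ∧
      ∀ ξ η : EuclideanSpace ℝ (Fin n),
        c₁ * (1 + ‖ξ‖) ^ (-μ) * ‖η‖ ^ 2 ≤ hessQ f ξ η ∧
        hessQ f ξ η ≤ c₂ * (1 + ‖ξ‖) ^ (-(1:ℝ)) * ‖η‖ ^ 2 := by
  subst hf
  have hG : ∀ η : EuclideanSpace ℝ (Fin n),
      (fun x => fderiv ℝ (fun ξ : EuclideanSpace ℝ (Fin n) => Phi μ ‖ξ‖) x η)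
        = fun x => aPhi μ ‖x‖ * inner ℝ x η := by
    intro η
    ext x
    rw [(f_fd μ hμ x).fderiv]; simp
  have hL : ∀ η : EuclideanSpace ℝ (Fin n),
      fderiv ℝ (fun x : EuclideanSpace ℝ (Fin n) => aPhi μ ‖x‖ * inner ℝ x η) = LPhi μ η :=
    fun η => funext fun x => (G_fd μ η x).fderiv
  constructor
  · rw [show (2 : WithTop ℕ∞) = 1 + 1 by norm_num, contDiff_succ_iff_fderiv_apply]
    refine ⟨fun x => (f_fd μ hμ x).differentiableAt, by simp, fun η => ?_⟩
    rw [hG, contDiff_one_iff_fderiv, hL]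
    exact ⟨fun x => (G_fd μ η x).differentiableAt, L_cont μ hμ η⟩
  · refine ⟨μ - 1, μ, by linarith, by linarith, fun ξ η => ?_⟩
    unfold hessQ
    rw [hG, hL]
    exact L_bound μ hμ ξ η
end

section
/- (Higher-integrability iteration.) In the splitting setting described below, assume additionally that μ₁ < 2 and |u| ≤ M on Ω for some M > 0. Fix χ > 2 and set s := χ/2 − 1, ε̂ := 1 − μ₁/2 > 0, α := s − ε̂/2, and assume α ≥ 0. Then there exists l₀ ∈ ℕ such that for every integer l ≥ l₀ and every η ∈ C_c^∞(Ω) with 0 ≤ η ≤ 1 there is a constant c > 0 depending on η, χ, l, M and the structural constants but not on δ or u, with ∫_Ω η^{2l} Γ₁^{s+1} dx ≤ c [ 1 + ∫_Ω η^{2l} Γ₁^{s + (2+μ₁)/4} dx ]. -/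
open Real MeasureTheory

/-- Partial derivative of `v : ℝ² → ℝ` in the `i`-th coordinate direction. -/
noncomputable def pd (i : Fin 2) (v : EuclideanSpace ℝ (Fin 2) → ℝ)
    (x : EuclideanSpace ℝ (Fin 2)) : ℝ :=
  fderiv ℝ v x (EuclideanSpace.single i 1)

lemma hi_young (C ε b t : ℝ) (j m : ℕ) (hC : 0 ≤ C) (hε : 0 < ε) (hb : 0 ≤ b) (hbt : b < t)
    (hm : (j : ℝ) * b / (t - b) ≤ m) :
    ∃ C' : ℝ, 0 ≤ C' ∧ ∀ e G : ℝ, 0 ≤ e → e ≤ 1 → 1 ≤ G →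
      C * (e ^ m * G ^ b) ≤ ε * (e ^ (m + j) * G ^ t) + C' := by
  have hg : 0 < t - b := sub_pos.2 hbt
  refine ⟨C * (C / ε) ^ (b / (t - b)), by positivity, ?_⟩
  intro e G he he1 hG
  have hG0 : 0 < G := by linarith
  have hGt : G ^ t = G ^ b * G ^ (t - b) := by rw [← Real.rpow_add hG0]; congr 1; ring
  have hGb : 0 < G ^ b := by positivity
  rcases le_or_gt C (ε * (e ^ j * G ^ (t - b))) with h | h
  · have h1 : 0 ≤ C * (C / ε) ^ (b / (t - b)) := by positivity
    have h2 : C * (e ^ m * G ^ b) ≤ (ε * (e ^ j * G ^ (t - b))) * (e ^ m * G ^ b) :=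
      mul_le_mul_of_nonneg_right h (by positivity)
    rw [hGt, pow_add]
    linarith
  · have h3 : e ^ j * G ^ (t - b) ≤ C / ε := by
      rw [le_div_iff₀ hε]; linarith
    have h4 : (e ^ j * G ^ (t - b)) ^ (b / (t - b)) ≤ (C / ε) ^ (b / (t - b)) :=
      Real.rpow_le_rpow (by positivity) h3 (by positivity)
    have h5 : (e ^ j * G ^ (t - b)) ^ (b / (t - b)) = e ^ ((j : ℝ) * b / (t - b)) * G ^ b := by
      rw [Real.mul_rpow (by positivity) (by positivity), ← Real.rpow_mul hG0.le,
        ← Real.rpow_natCast, ← Real.rpow_mul he]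
      congr 2
      · ring
      · field_simp
    have h6 : e ^ m ≤ e ^ ((j : ℝ) * b / (t - b)) := by
      rw [← Real.rpow_natCast]
      exact Real.rpow_le_rpow_of_exponent_ge' he he1 (by positivity) hm
    have h7 : e ^ m * G ^ b ≤ (C / ε) ^ (b / (t - b)) :=
      (mul_le_mul_of_nonneg_right h6 hGb.le).trans (h5 ▸ h4)
    have h8 := mul_le_mul_of_nonneg_left h7 hC
    have h9 : 0 ≤ ε * (e ^ (m + j) * G ^ t) := by positivity
    linarith

lemma pd_contDiff {n m : WithTop ℕ∞} (hmn : m + 1 ≤ n) (i : Fin 2)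
    {v : EuclideanSpace ℝ (Fin 2) → ℝ} (hv : ContDiff ℝ n v) : ContDiff ℝ m (pd i v) := by
  unfold pd
  exact (hv.fderiv_right hmn).clm_apply contDiff_const

lemma pd_supp (i : Fin 2)
    {v : EuclideanSpace ℝ (Fin 2) → ℝ} (hv : HasCompactSupport v) : HasCompactSupport (pd i v) := by
  unfold pd
  exact hv.fderiv_apply ℝ _

lemma pd_ibp (i : Fin 2) {f g : EuclideanSpace ℝ (Fin 2) → ℝ} (hf : ContDiff ℝ 1 f)
    (hg : ContDiff ℝ 1 g) (hs : HasCompactSupport g) :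
    ∫ x, f x * pd i g x = - ∫ x, pd i f x * g x := by
  have hf' : Continuous (pd i f) := (pd_contDiff (m := 0) (by simp) i hf).continuous
  have hg' : Continuous (pd i g) := (pd_contDiff (m := 0) (by simp) i hg).continuous
  apply integral_mul_fderiv_eq_neg_fderiv_mul_of_integrable
  · exact (hf'.mul hg.continuous).integrable_of_hasCompactSupport hs.mul_left
  · exact (hf.continuous.mul hg').integrable_of_hasCompactSupport (pd_supp i hs).mul_left
  · exact (hf.continuous.mul hg.continuous).integrable_of_hasCompactSupport hs.mul_left
  · exact fun x _ => hf.differentiable (by simp) x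
  · exact fun x _ => hg.differentiable (by simp) x

lemma pd_comm {v : EuclideanSpace ℝ (Fin 2) → ℝ} (hv : ContDiff ℝ 2 v)
    (x : EuclideanSpace ℝ (Fin 2)) : pd 0 (pd 1 v) x = pd 1 (pd 0 v) x := by
  have hd : DifferentiableAt ℝ (fderiv ℝ v) x :=
    ((hv.fderiv_right (m := 1) (by norm_num)).differentiable (by simp)) x
  have hsym : IsSymmSndFDerivAt ℝ v x := hv.contDiffAt.isSymmSndFDerivAt (by simp)
  unfold pd
  rw [fderiv_clm_apply hd (differentiableAt_const _), fderiv_clm_apply hd (differentiableAt_const _)]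
  simp
  exact hsym.eq _ _

lemma pd_comp (i : Fin 2) {h : ℝ → ℝ} {v : EuclideanSpace ℝ (Fin 2) → ℝ}
    {x : EuclideanSpace ℝ (Fin 2)} (hh : DifferentiableAt ℝ h (v x)) (hv : DifferentiableAt ℝ v x) :
    pd i (fun y => h (v y)) x = deriv h (v x) * pd i v x := by
  unfold pd
  have := (hh.hasDerivAt.comp_hasFDerivAt x hv.hasFDerivAt).fderiv
  have h2 : (h ∘ v) = fun y => h (v y) := rfl
  rw [h2] at this
  rw [this]; simp

lemma pd_mul (i : Fin 2) {v w : EuclideanSpace ℝ (Fin 2) → ℝ}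
    {x : EuclideanSpace ℝ (Fin 2)} (hv : DifferentiableAt ℝ v x) (hw : DifferentiableAt ℝ w x) :
    pd i (fun y => v y * w y) x = pd i v x * w x + v x * pd i w x := by
  unfold pd
  rw [fderiv_fun_mul hv hw]; simp; ring

/-- derivative of the test function -/
lemma pd_test (i : Fin 2) (n : ℕ) (β : ℝ) {η p : EuclideanSpace ℝ (Fin 2) → ℝ}
    {x : EuclideanSpace ℝ (Fin 2)} (hη : DifferentiableAt ℝ η x) (hp : DifferentiableAt ℝ p x) :
    pd i (fun y => η y ^ n * (p y * (1 + p y ^ 2) ^ β)) x =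
      n * η x ^ (n - 1) * pd i η x * (p x * (1 + p x ^ 2) ^ β) +
      η x ^ n * ((1 + p x ^ 2) ^ β * (1 + 2 * β * (p x ^ 2 / (1 + p x ^ 2))) * pd i p x) := by
  have hpos : ∀ t : ℝ, 0 < 1 + t ^ 2 := fun t => by positivity
  have hd : ∀ t : ℝ, HasDerivAt (fun t : ℝ => t * (1 + t ^ 2) ^ β)
      ((1 + t ^ 2) ^ β * (1 + 2 * β * (t ^ 2 / (1 + t ^ 2)))) t := by
    intro t
    have h1 : HasDerivAt (fun t : ℝ => 1 + t ^ 2) (2 * t) t := by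
      simpa using (hasDerivAt_pow 2 t).const_add 1
    have h2 := (hasDerivAt_id t).mul (h1.rpow_const (p := β) (Or.inl (hpos t).ne'))
    refine HasDerivAt.congr_deriv h2 ?_
    simp only [id]
    rw [Real.rpow_sub_one (hpos t).ne']
    have := hpos t
    field_simp
  have e1 := pd_comp i (h := fun t : ℝ => t * (1 + t ^ 2) ^ β) (hd (p x)).differentiableAt hp
  have e2 := pd_comp i (h := fun t : ℝ => t ^ n) (differentiableAt_pow n) hη
  rw [pd_mul i (by fun_prop) 
    (w := fun y => p y * (1 + p y ^ 2) ^ β) ((hd (p x)).differentiableAt.comp x hp)]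
  rw [e1, e2, (hd (p x)).deriv]
  simp

lemma weak_eq {Ω : Set (EuclideanSpace ℝ (Fin 2))} {f₁ f₂ : ℝ → ℝ} (hf₁ : ContDiff ℝ 2 f₁)
    (hf₂ : ContDiff ℝ 2 f₂) (δ : ℝ) {u φ : EuclideanSpace ℝ (Fin 2) → ℝ} (hu : ContDiff ℝ 3 u)
    (heq : ∀ x ∈ Ω, δ * (pd 0 (pd 0 u) x + pd 1 (pd 1 u) x)
            + deriv (deriv f₁) (pd 0 u x) * pd 0 (pd 0 u) x
            + deriv (deriv f₂) (pd 1 u x) * pd 1 (pd 1 u) x = 0)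
    (hφ : ContDiff ℝ 2 φ) (hs : HasCompactSupport φ) (hsΩ : tsupport φ ⊆ Ω) :
    ∫ x, ((δ + deriv (deriv f₁) (pd 0 u x)) * pd 0 (pd 0 u) x * pd 0 φ x +
      (δ + deriv (deriv f₂) (pd 1 u x)) * pd 1 (pd 0 u) x * pd 1 φ x) = 0 := by
  have hu0 : ContDiff ℝ 2 (pd 0 u) := pd_contDiff (by norm_num) 0 hu
  have hu1 : ContDiff ℝ 2 (pd 1 u) := pd_contDiff (by norm_num) 1 hu
  have hdf₁ : ContDiff ℝ 1 (deriv f₁) := ContDiff.deriv' (n := 1) (by rw [one_add_one_eq_two]; exact hf₁)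
  have hdf₂ : ContDiff ℝ 1 (deriv f₂) := ContDiff.deriv' (n := 1) (by rw [one_add_one_eq_two]; exact hf₂)
  have hd1 : ∀ t, HasDerivAt (fun t : ℝ => δ * t + deriv f₁ t) (δ + deriv (deriv f₁) t) t := by
    intro t
    have h := (hdf₁.differentiable (by simp) t).hasDerivAt
    exact (((hasDerivAt_id t).const_mul δ).add h).congr_deriv (by simp)
  have hd2 : ∀ t, HasDerivAt (fun t : ℝ => δ * t + deriv f₂ t) (δ + deriv (deriv f₂) t) t := by
    intro t
    have h := (hdf₂.differentiable (by simp) t).hasDerivAt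
    exact (((hasDerivAt_id t).const_mul δ).add h).congr_deriv (by simp)
  set F₂ : EuclideanSpace ℝ (Fin 2) → ℝ := fun x => δ * pd 1 u x + deriv f₂ (pd 1 u x) with hF₂
  have hF₂c : ContDiff ℝ 1 F₂ := by
    have h1 : ContDiff ℝ 1 (pd 1 u) := hu1.of_le (by norm_num)
    exact (contDiff_const.mul h1).add (hdf₂.comp h1)
  have hpF : ∀ i x, pd i F₂ x = (δ + deriv (deriv f₂) (pd 1 u x)) * pd i (pd 1 u) x := by
    intro i x
    have := pd_comp i (h := fun t : ℝ => δ * t + deriv f₂ t) (v := pd 1 u) (x := x)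
      (hd2 _).differentiableAt (hu1.differentiable (by simp) x)
    rw [(hd2 _).deriv] at this
    exact this
  have hφ0 : ContDiff ℝ 1 (pd 0 φ) := pd_contDiff (by norm_num) 0 hφ
  have hφ1 : ContDiff ℝ 1 (pd 1 φ) := pd_contDiff (by norm_num) 1 hφ
  have hs0 := pd_supp 0 hs
  have hs1 := pd_supp 1 hs
  have key : ∫ x, pd 0 F₂ x * pd 1 φ x = ∫ x, pd 1 F₂ x * pd 0 φ x := by
    have e1 := pd_ibp 0 hF₂c hφ1 hs1
    have e2 := pd_ibp 1 hF₂c hφ0 hs0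
    have e3 : ∫ x, F₂ x * pd 0 (pd 1 φ) x = ∫ x, F₂ x * pd 1 (pd 0 φ) x := by
      congr 1; ext x; rw [pd_comm hφ]
    linarith
  have hc0 : Continuous (pd 0 F₂) := (pd_contDiff (m := 0) (by simp) 0 hF₂c).continuous
  have hc1 : Continuous (pd 1 F₂) := (pd_contDiff (m := 0) (by simp) 1 hF₂c).continuous
  have hi0 : Integrable (fun x => pd 0 F₂ x * pd 1 φ x) :=
    (hc0.mul hφ1.continuous).integrable_of_hasCompactSupport hs1.mul_left
  have hi1 : Integrable (fun x => pd 1 F₂ x * pd 0 φ x) :=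
    (hc1.mul hφ0.continuous).integrable_of_hasCompactSupport hs0.mul_left
  have hpt : ∀ x, (δ + deriv (deriv f₁) (pd 0 u x)) * pd 0 (pd 0 u) x * pd 0 φ x +
      (δ + deriv (deriv f₂) (pd 1 u x)) * pd 1 (pd 0 u) x * pd 1 φ x =
      pd 0 F₂ x * pd 1 φ x - pd 1 F₂ x * pd 0 φ x := by
    intro x
    rw [hpF, hpF, pd_comm (hu.of_le (by norm_num))]
    by_cases hx : x ∈ tsupport φ
    · have := heq x (hsΩ hx)
      linear_combination (pd 0 φ x) * this
    · have : pd 0 φ x = 0 := by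
        unfold pd
        rw [fderiv_of_notMem_tsupport ℝ hx]; simp
      rw [this]; ring
  simp_rw [hpt]
  rw [integral_sub hi0 hi1, key, sub_self]

lemma caccio (l : ℕ) (hl : 1 ≤ l) (α A Λ K e p h a : ℝ) (hα : 0 ≤ α) (hA : 0 ≤ A) (hAΛ : A ≤ Λ)
    (hh : |h| ≤ K) :
    1 / 2 * A * (e ^ (2 * l) * ((1 + p ^ 2) ^ α * a ^ 2)) -
      1 / 2 * (2 * l) ^ 2 * K ^ 2 * Λ * (e ^ (2 * l - 2) * (1 + p ^ 2) ^ (α + 1)) ≤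
    A * a * (((2 * l : ℕ) : ℝ) * e ^ (2 * l - 1) * h * (p * (1 + p ^ 2) ^ α) +
      e ^ (2 * l) * ((1 + p ^ 2) ^ α * (1 + 2 * α * (p ^ 2 / (1 + p ^ 2))) * a)) := by
  obtain ⟨m, rfl⟩ : ∃ m, l = m + 1 := ⟨l - 1, by omega⟩
  have hG : 0 < 1 + p ^ 2 := by positivity
  have e0 : e ^ (2 * (m + 1)) = (e ^ (m + 1)) ^ 2 := by rw [← pow_mul]; ring
  have e1 : e ^ (2 * (m + 1) - 1) = e ^ (m + 1) * e ^ m := by rw [← pow_add]; congr 1; omega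
  have e2 : e ^ (2 * (m + 1) - 2) = (e ^ m) ^ 2 := by rw [← pow_mul]; congr 1; omega
  rw [e0, e1, e2, Real.rpow_add_one hG.ne']
  push_cast
  set X := e ^ (m + 1)
  set Y := e ^ m
  set L : ℝ := 2 * ((m : ℝ) + 1)
  set B := (1 + p ^ 2) ^ α with hB
  have hB0 : 0 < B := by positivity
  set r := p ^ 2 / (1 + p ^ 2) with hr
  have hr0 : 0 ≤ r := by positivity
  have hK2 : h ^ 2 ≤ K ^ 2 := sq_le_sq' (by linarith [neg_abs_le h]) ((le_abs_self h).trans hh)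
  have h1 : A * (h ^ 2 * p ^ 2) ≤ Λ * (K ^ 2 * (1 + p ^ 2)) := by
    gcongr
    · linarith
    · linarith
  have h2 : 0 ≤ A * B * (X * a + L * Y * h * p) ^ 2 := by positivity
  have h3 : 0 ≤ A * B * (X ^ 2 * a ^ 2 * (α * r)) := by positivity
  have h4 := mul_le_mul_of_nonneg_left h1 (show 0 ≤ B * (L ^ 2 * Y ^ 2) by positivity)
  nlinarith

lemma zeroth (l : ℕ) (s M K w e p h a : ℝ) (hs : 0 ≤ s) (he : 0 ≤ e)
    (hw : |w| ≤ M) (hh : |h| ≤ K) :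
    - (w * (((2 * l : ℕ) : ℝ) * e ^ (2 * l - 1) * h * (p * (1 + p ^ 2) ^ s) +
      e ^ (2 * l) * ((1 + p ^ 2) ^ s * (1 + 2 * s * (p ^ 2 / (1 + p ^ 2))) * a))) ≤
    M * (1 + 2 * s) * (e ^ (2 * l) * ((1 + p ^ 2) ^ s * |a|)) +
      M * (2 * l) * K * (e ^ (2 * l - 1) * (1 + p ^ 2) ^ (s + 1 / 2)) := by
  have hG : 0 < 1 + p ^ 2 := by positivity
  have hM : 0 ≤ M := (abs_nonneg w).trans hw
  have hK : 0 ≤ K := (abs_nonneg h).trans hh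
  have hr1 : p ^ 2 / (1 + p ^ 2) ≤ 1 := by rw [div_le_one hG]; linarith
  have hr0 : 0 ≤ p ^ 2 / (1 + p ^ 2) := by positivity
  have hp : |p| ≤ (1 + p ^ 2) ^ (1 / 2 : ℝ) := by
    rw [← Real.sqrt_eq_rpow, ← Real.sqrt_sq_eq_abs]
    exact Real.sqrt_le_sqrt (by linarith)
  rw [Real.rpow_add hG]
  refine (neg_le_abs _).trans ?_
  rw [abs_mul]
  refine (mul_le_mul_of_nonneg_left (abs_add_le _ _) (abs_nonneg w)).trans ?_
  simp only [abs_mul, abs_pow, abs_of_nonneg he, abs_of_pos (Real.rpow_pos_of_pos hG s),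
    Nat.abs_cast]
  rw [abs_of_nonneg (show 0 ≤ 1 + 2 * s * (p ^ 2 / (1 + p ^ 2)) by positivity)]
  push_cast
  set B := (1 + p ^ 2) ^ s with hB
  have hB0 : 0 < B := by positivity
  have i1 : |w| * (2 * l * e ^ (2 * l - 1) * |h| * (|p| * B)) ≤
      M * (2 * l * e ^ (2 * l - 1) * K * ((1 + p ^ 2) ^ (1 / 2 : ℝ) * B)) := by gcongr
  have i2 : |w| * (e ^ (2 * l) * (B * (1 + 2 * s * (p ^ 2 / (1 + p ^ 2))) * |a|)) ≤
      M * (e ^ (2 * l) * (B * (1 + 2 * s * 1) * |a|)) := by gcongr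
  nlinarith

lemma amgm (C k G s r q a : ℝ) (hk : 0 < k) (hG : 0 < G) (hrq : r + q = 2 * s) :
    C * (G ^ s * |a|) ≤ k * (G ^ r * a ^ 2) + C ^ 2 / (4 * k) * G ^ q := by
  have h1 : G ^ r = (G ^ (r / 2)) ^ 2 := by
    rw [← Real.rpow_natCast, ← Real.rpow_mul hG.le]; congr 1; push_cast; ring
  have h2 : G ^ q = (G ^ (q / 2)) ^ 2 := by
    rw [← Real.rpow_natCast, ← Real.rpow_mul hG.le]; congr 1; push_cast; ring
  have h3 : G ^ s = G ^ (r / 2) * G ^ (q / 2) := by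
    rw [← Real.rpow_add hG]; congr 1; linarith
  rw [h1, h2, h3, ← sq_abs a]
  set x := G ^ (r / 2)
  set y := G ^ (q / 2)
  have h4 : k * (x ^ 2 * |a| ^ 2) + C ^ 2 / (4 * k) * y ^ 2 - C * (x * y * |a|) =
      (2 * k * (x * |a|) - C * y) ^ 2 / (4 * k) := by field_simp; ring
  have h5 : 0 ≤ (2 * k * (x * |a|) - C * y) ^ 2 / (4 * k) := by positivity
  linarith

lemma ell_lower (μ t : ℝ) (hμ : 0 ≤ μ) :
    2 ^ (-(μ / 2)) * (1 + t ^ 2) ^ (-(μ / 2)) ≤ (1 + |t|) ^ (-μ) := by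
  have h1 : (1 + |t|) ^ 2 ≤ 2 * (1 + t ^ 2) := by
    rw [← sq_abs t]; nlinarith [sq_nonneg (|t| - 1)]
  have h0 : 0 < 1 + |t| := by positivity
  rw [← Real.mul_rpow (by norm_num) (by positivity)]
  have h2 : (1 + |t|) ^ (-μ) = ((1 + |t|) ^ 2) ^ (-(μ / 2)) := by
    rw [← Real.rpow_natCast, ← Real.rpow_mul h0.le]; congr 1; push_cast; ring
  rw [h2]
  exact Real.rpow_le_rpow_of_nonpos (by positivity) h1 (by linarith)

set_option maxHeartbeats 2000000 in
/-- higher-integrability iteration: in the splitting setting with `μ₁ < 2` and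
`|u| ≤ M`, for `χ > 2`, `s = χ/2 - 1`, `ε̂ = 1 - μ₁/2`, `α = s - ε̂/2 ≥ 0`, and `l`
sufficiently large: `∫ η^{2l} Γ₁^{s+1} ≤ c [1 + ∫ η^{2l} Γ₁^{s+(2+μ₁)/4}]`. -/
theorem higher_integrability_iteration
    (Ω : Set (EuclideanSpace ℝ (Fin 2))) (hΩo : IsOpen Ω) (hΩb : Bornology.IsBounded Ω)
    (f₁ f₂ : ℝ → ℝ) (hf₁ : ContDiff ℝ 2 f₁) (hf₂ : ContDiff ℝ 2 f₂)
    (c₁ c₂ cb₁ cb₂ μ₁ μ₂ : ℝ)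
    (hc₁ : 0 < c₁) (hc₂ : 0 < c₂) (hcb₁ : 0 < cb₁) (hcb₂ : 0 < cb₂)
    (hμ₁ : 1 < μ₁) (hμ₂ : 1 < μ₂) (hμ₁' : μ₁ < 2)
    (hell₁ : ∀ t : ℝ, c₁ * (1 + |t|) ^ (-μ₁) ≤ deriv (deriv f₁) t ∧ deriv (deriv f₁) t ≤ cb₁)
    (hell₂ : ∀ t : ℝ, c₂ * (1 + |t|) ^ (-μ₂) ≤ deriv (deriv f₂) t ∧ deriv (deriv f₂) t ≤ cb₂)
    (M : ℝ) (hM : 0 < M)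
    (χ s ε' α : ℝ) (hχ : 2 < χ) (hs : s = χ / 2 - 1) (hε' : ε' = 1 - μ₁ / 2)
    (hαdef : α = s - ε' / 2) (hα : 0 ≤ α) :
    ∃ l₀ : ℕ, 1 ≤ l₀ ∧
      ∀ (l : ℕ), l₀ ≤ l →
      ∀ (η : EuclideanSpace ℝ (Fin 2) → ℝ), ContDiff ℝ (⊤ : ℕ∞) η →
        HasCompactSupport η → tsupport η ⊆ Ω →
        (∀ x, 0 ≤ η x) → (∀ x, η x ≤ 1) →
      ∃ c : ℝ, 0 < c ∧
        ∀ (δ : ℝ), 0 < δ → δ ≤ 1 →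
        ∀ (u : EuclideanSpace ℝ (Fin 2) → ℝ), ContDiff ℝ (⊤ : ℕ∞) u →
        (∀ x ∈ Ω, |u x| ≤ M) →
        (∀ x ∈ Ω, δ * (pd 0 (pd 0 u) x + pd 1 (pd 1 u) x)
            + deriv (deriv f₁) (pd 0 u x) * pd 0 (pd 0 u) x
            + deriv (deriv f₂) (pd 1 u x) * pd 1 (pd 1 u) x = 0) →
        (∫ x in Ω, η x ^ (2 * l) * (1 + (pd 0 u x) ^ 2) ^ (s + 1))
          ≤ c * (1 + ∫ x in Ω,
              η x ^ (2 * l) * (1 + (pd 0 u x) ^ 2) ^ (s + (2 + μ₁) / 4)) := by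
  subst hs hε' hαdef
  set s : ℝ := χ / 2 - 1 with hs
  set ε' : ℝ := 1 - μ₁ / 2 with hε'
  set α : ℝ := s - ε' / 2 with hαdef
  have hs0 : 0 < s := by rw [hs]; linarith
  have hε0 : 0 < ε' := by rw [hε']; linarith
  obtain ⟨N, hN⟩ := exists_nat_ge
    (max (2 * (α + 1) / ((s + 1) - (α + 1))) ((s + 1 / 2) / ((s + 1) - (s + 1 / 2))))
  refine ⟨N + 2, by omega, ?_⟩
  intro l hl η hη hηs hηΩ hη0 hη1
  have hl1 : 1 ≤ l := by omega
  have hηc : ∀ i, Continuous (pd i η) := fun i =>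
    (pd_contDiff (n := 1) (m := 0) (by simp) i (hη.of_le (by exact_mod_cast le_top))).continuous
  obtain ⟨K0, hK0⟩ := (pd_supp 0 hηs).exists_bound_of_continuous (hηc 0)
  obtain ⟨K1, hK1⟩ := (pd_supp 1 hηs).exists_bound_of_continuous (hηc 1)
  set K := max K0 K1 with hK
  have hKK0 : ∀ x, |pd 0 η x| ≤ K := fun x => (hK0 x).trans (le_max_left _ _)
  have hKK1 : ∀ x, |pd 1 η x| ≤ K := fun x => (hK1 x).trans (le_max_right _ _)
  have hKnn : 0 ≤ K := (abs_nonneg _).trans (hKK0 0)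
  set k : ℝ := c₁ * 2 ^ (-(μ₁ / 2)) / 2 with hk
  have hk0 : 0 < k := by positivity
  set q : ℝ := s + (2 + μ₁) / 4 with hq
  set C3 : ℝ := 1 / 2 * (2 * l) ^ 2 * K ^ 2 * (1 + cb₁) + 1 / 2 * (2 * l) ^ 2 * K ^ 2 * (1 + cb₂)
    with hC3
  obtain ⟨D1, hD1, hY1⟩ := hi_young 1 (1 / 6) s (s + 1) 0 (2 * l) (by norm_num) (by norm_num)
    hs0.le (by linarith) (by simp)
  obtain ⟨D2, hD2, hY2⟩ := hi_young (M * (2 * l) * K) (1 / 6) (s + 1 / 2) (s + 1) 1 (2 * l - 1)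
    (by positivity) (by norm_num) (by linarith) (by linarith) (by
      have h1 : (N : ℝ) ≤ ((2 * l - 1 : ℕ) : ℝ) := by exact_mod_cast (by omega)
      have h2 := (le_max_right _ _).trans hN
      simpa using h2.trans h1)
  obtain ⟨D3, hD3, hY3⟩ := hi_young C3 (1 / 6) (α + 1) (s + 1) 2 (2 * l - 2)
    (by positivity) (by norm_num) (by linarith) (by rw [hαdef]; linarith) (by
      have h1 : (N : ℝ) ≤ ((2 * l - 2 : ℕ) : ℝ) := by exact_mod_cast (by omega)
      have h2 := (le_max_left _ _).trans hN
      simpa using h2.trans h1)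
  have el1 : 2 * l - 1 + 1 = 2 * l := by omega
  have el2 : 2 * l - 2 + 2 = 2 * l := by omega
  rw [el1] at hY2
  rw [el2] at hY3
  rw [add_zero] at hY1
  set C2 : ℝ := (M * (1 + 2 * s)) ^ 2 / (4 * k) with hC2
  have hC2nn : 0 ≤ C2 := by positivity
  set C1 : ℝ := D1 + D2 + D3 with hC1
  have hC1nn : 0 ≤ C1 := by positivity
  set V : ℝ := (volume : Measure (EuclideanSpace ℝ (Fin 2))).real Ω with hV
  have hVnn : 0 ≤ V := measureReal_nonneg
  refine ⟨2 * C1 * V + 2 * C2 + 1, by positivity, ?_⟩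
  intro δ hδ hδ1 u hu hub heq
  have hu3 : ContDiff ℝ 3 u := by exact_mod_cast contDiff_infty.1 hu 3
  have hη2 : ContDiff ℝ 2 η := by exact_mod_cast contDiff_infty.1 hη 2
  have hp2 : ContDiff ℝ 2 (pd 0 u) := pd_contDiff (by norm_num) 0 hu3
  have hp2' : ContDiff ℝ 2 (pd 1 u) := pd_contDiff (by norm_num) 1 hu3
  have hGne : ∀ x, 1 + (pd 0 u x) ^ 2 ≠ 0 := fun x => by positivity
  have hGc : ∀ β : ℝ, ContDiff ℝ 2 (fun x => (1 + (pd 0 u x) ^ 2) ^ β) := fun β =>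
    (contDiff_const.add (hp2.pow 2)).rpow_const_of_ne hGne
  have hηt : ∀ x, x ∉ tsupport η → η x = 0 := fun x hx => image_eq_zero_of_notMem_tsupport hx
  have h2l : 2 * l ≠ 0 := by omega
  have hηpow : HasCompactSupport (fun x => η x ^ (2 * l)) :=
    hηs.comp_left (g := fun t : ℝ => t ^ (2 * l)) (by simp [h2l])
  -- test functions
  have hT : ∀ β : ℝ, ContDiff ℝ 2
      (fun y => η y ^ (2 * l) * (pd 0 u y * (1 + pd 0 u y ^ 2) ^ β)) := fun β =>
    (hη2.pow _).mul (hp2.mul (hGc β))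
  have hTs : ∀ β : ℝ, HasCompactSupport
      (fun y => η y ^ (2 * l) * (pd 0 u y * (1 + pd 0 u y ^ 2) ^ β)) := fun β =>
    hηpow.mul_right
  have hTt : ∀ β : ℝ, tsupport
      (fun y => η y ^ (2 * l) * (pd 0 u y * (1 + pd 0 u y ^ 2) ^ β)) ⊆ Ω := fun β => by
    refine subset_trans (closure_mono ?_) hηΩ
    intro x hx hx0
    apply hx
    have : η x = 0 := hx0
    simp [this, h2l]
  set φ := fun y => η y ^ (2 * l) * (pd 0 u y * (1 + pd 0 u y ^ 2) ^ α) with hφ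
  set ψ := fun y => η y ^ (2 * l) * (pd 0 u y * (1 + pd 0 u y ^ 2) ^ s) with hψ
  have hφc : ContDiff ℝ 2 φ := hT α
  have hψc : ContDiff ℝ 2 ψ := hT s
  have hφs : HasCompactSupport φ := hTs α
  have hψs : HasCompactSupport ψ := hTs s
  have hW := weak_eq hf₁ hf₂ δ hu3 heq hφc hφs (hTt α)
  have hu1 : ContDiff ℝ 1 u := hu.of_le (by exact_mod_cast le_top)
  have hψ1 : ContDiff ℝ 1 ψ := hψc.of_le (by norm_num)
  have hP := pd_ibp 0 hu1 hψ1 hψs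
  set Q : EuclideanSpace ℝ (Fin 2) → ℝ := fun x =>
    (δ + deriv (deriv f₁) (pd 0 u x)) * pd 0 (pd 0 u) x * pd 0 φ x +
      (δ + deriv (deriv f₂) (pd 1 u x)) * pd 1 (pd 0 u) x * pd 1 φ x with hQ
  set LHS : EuclideanSpace ℝ (Fin 2) → ℝ := fun x =>
    η x ^ (2 * l) * (1 + (pd 0 u x) ^ 2) ^ (s + 1) with hLHS
  set RHS : EuclideanSpace ℝ (Fin 2) → ℝ := fun x =>
    η x ^ (2 * l) * (1 + (pd 0 u x) ^ 2) ^ q with hRHS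
  -- continuity / integrability
  have c0 : ∀ i, Continuous (pd i φ) := fun i =>
    (pd_contDiff (m := 1) (by norm_num) i hφc).continuous
  have cψ : Continuous (pd 0 ψ) := (pd_contDiff (m := 1) (by norm_num) 0 hψc).continuous
  have cp : ∀ i, Continuous (pd i (pd 0 u)) := fun i =>
    (pd_contDiff (m := 1) (by norm_num) i hp2).continuous
  have cf₁ : Continuous (deriv (deriv f₁)) := by
    have h : ContDiff ℝ 1 (deriv f₁) :=
      ContDiff.deriv' (n := 1) (by rw [one_add_one_eq_two]; exact hf₁)
    exact h.continuous_deriv (by norm_num)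
  have cf₂ : Continuous (deriv (deriv f₂)) := by
    have h : ContDiff ℝ 1 (deriv f₂) :=
      ContDiff.deriv' (n := 1) (by rw [one_add_one_eq_two]; exact hf₂)
    exact h.continuous_deriv (by norm_num)
  have iQ : Integrable Q := by
    refine Integrable.add ?_ ?_
    · exact (((continuous_const.add (cf₁.comp hp2.continuous)).mul (cp 0)).mul
        (c0 0)).integrable_of_hasCompactSupport (pd_supp 0 hφs).mul_left
    · exact (((continuous_const.add (cf₂.comp hp2'.continuous)).mul (cp 1)).mul
        (c0 1)).integrable_of_hasCompactSupport (pd_supp 1 hφs).mul_left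
  have iL : Integrable LHS := ((hη2.continuous.pow _).mul
    (hGc (s + 1)).continuous).integrable_of_hasCompactSupport hηpow.mul_right
  have iR : Integrable RHS := ((hη2.continuous.pow _).mul
    (hGc q).continuous).integrable_of_hasCompactSupport hηpow.mul_right
  have i1 : Integrable (fun x => u x * pd 0 ψ x) :=
    (hu1.continuous.mul cψ).integrable_of_hasCompactSupport (pd_supp 0 hψs).mul_left
  have i2 : Integrable (fun x => pd 0 u x * ψ x) :=
    (hp2.continuous.mul hψc.continuous).integrable_of_hasCompactSupport hψs.mul_left
  -- reduction of the left integral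
  have zη : ∀ x, x ∉ Ω → x ∉ tsupport η := fun x hx h => hx (hηΩ h)
  have eL : ∫ x in Ω, (LHS x - (pd 0 u x * ψ x + u x * pd 0 ψ x) - Q x) = ∫ x in Ω, LHS x := by
    rw [integral_sub (f := fun x => LHS x - (pd 0 u x * ψ x + u x * pd 0 ψ x))
        (iL.sub (i2.add i1)).integrableOn iQ.integrableOn,
      integral_sub (g := fun x => pd 0 u x * ψ x + u x * pd 0 ψ x)
        iL.integrableOn (i2.add i1).integrableOn]
    have z1 : ∫ x in Ω, (pd 0 u x * ψ x + u x * pd 0 ψ x) = 0 := by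
      rw [setIntegral_eq_integral_of_forall_compl_eq_zero]
      · rw [integral_add i2 i1, hP]; ring
      · intro x hx
        have h1 : x ∉ tsupport ψ := fun h => hx (hTt s h)
        have h2 : ψ x = 0 := image_eq_zero_of_notMem_tsupport h1
        have h3 : pd 0 ψ x = 0 := by
          unfold pd
          rw [fderiv_of_notMem_tsupport ℝ h1]; simp
        rw [h2, h3]; ring
    have z2 : ∫ x in Ω, Q x = 0 := by
      rw [setIntegral_eq_integral_of_forall_compl_eq_zero]
      · exact hW
      · intro x hx
        have h1 : x ∉ tsupport φ := fun h => hx (hTt α h)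
        have h3 : ∀ i, pd i φ x = 0 := by
          intro i
          unfold pd
          rw [fderiv_of_notMem_tsupport ℝ h1]; simp
        simp only [hQ, h3]; ring
    rw [z1, z2]; ring
  have hpt : ∀ x ∈ Ω, LHS x - (pd 0 u x * ψ x + u x * pd 0 ψ x) - Q x ≤
      C1 + (1 / 2 * LHS x + C2 * RHS x) := by
    intro x hx
    have dη : DifferentiableAt ℝ η x := hη2.differentiable (by simp) x
    have dp : DifferentiableAt ℝ (pd 0 u) x := hp2.differentiable (by simp) x
    have hG1 : 1 ≤ 1 + pd 0 u x ^ 2 := by nlinarith [sq_nonneg (pd 0 u x)]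
    have hG0 : 0 < 1 + pd 0 u x ^ 2 := by linarith
    have y1 := hY1 (η x) _ (hη0 x) (hη1 x) hG1
    have y2 := hY2 (η x) _ (hη0 x) (hη1 x) hG1
    have y3 := hY3 (η x) _ (hη0 x) (hη1 x) hG1
    have b1 := hell₁ (pd 0 u x)
    have b2 := hell₂ (pd 1 u x)
    have b1' := ell_lower μ₁ (pd 0 u x) (by linarith)
    have b2' : 0 ≤ c₂ * (1 + |pd 1 u x|) ^ (-μ₂) := by positivity
    have b1'' : 0 ≤ c₁ * (1 + |pd 0 u x|) ^ (-μ₁) := by positivity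
    have k1 := caccio l hl1 α (δ + deriv (deriv f₁) (pd 0 u x)) (1 + cb₁) K (η x) (pd 0 u x)
      (pd 0 η x) (pd 0 (pd 0 u) x) hα (by linarith) (by linarith) (hKK0 x)
    have k2 := caccio l hl1 α (δ + deriv (deriv f₂) (pd 1 u x)) (1 + cb₂) K (η x) (pd 0 u x)
      (pd 1 η x) (pd 1 (pd 0 u) x) hα (by linarith) (by linarith) (hKK1 x)
    rw [← pd_test 0 (2 * l) α dη dp] at k1
    rw [← pd_test 1 (2 * l) α dη dp] at k2
    have k3 := zeroth l s M K (u x) (η x) (pd 0 u x) (pd 0 η x) (pd 0 (pd 0 u) x) hs0.le (hη0 x)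
      (hub x hx) (hKK0 x)
    rw [← pd_test 0 (2 * l) s dη dp] at k3
    have k4 := amgm (M * (1 + 2 * s)) k (1 + pd 0 u x ^ 2) s (α - μ₁ / 2) q (pd 0 (pd 0 u) x) hk0
      hG0 (by rw [hαdef, hq, hε']; ring)
    have he0 : 0 ≤ η x ^ (2 * l) := pow_nonneg (hη0 x) _
    have k5 := mul_le_mul_of_nonneg_left k4 he0
    have k6 : k * (η x ^ (2 * l) * ((1 + pd 0 u x ^ 2) ^ (α - μ₁ / 2) * pd 0 (pd 0 u) x ^ 2)) ≤
        1 / 2 * (δ + deriv (deriv f₁) (pd 0 u x)) *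
          (η x ^ (2 * l) * ((1 + pd 0 u x ^ 2) ^ α * pd 0 (pd 0 u) x ^ 2)) := by
      rw [sub_eq_add_neg, Real.rpow_add hG0]
      have h1 : 2 * k * (1 + pd 0 u x ^ 2) ^ (-(μ₁ / 2)) ≤
          δ + deriv (deriv f₁) (pd 0 u x) := by
        have := mul_le_mul_of_nonneg_left b1' hc₁.le
        rw [hk]
        linarith
      have h2 := mul_le_mul_of_nonneg_right h1 (show 0 ≤ 1 / 2 *
        (η x ^ (2 * l) * ((1 + pd 0 u x ^ 2) ^ α * pd 0 (pd 0 u) x ^ 2)) by positivity)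
      linarith
    have k7 : 0 ≤ 1 / 2 * (δ + deriv (deriv f₂) (pd 1 u x)) *
          (η x ^ (2 * l) * ((1 + pd 0 u x ^ 2) ^ α * pd 1 (pd 0 u) x ^ 2)) := by
      have : 0 ≤ δ + deriv (deriv f₂) (pd 1 u x) := by linarith
      positivity
    have k8 : LHS x - pd 0 u x * ψ x = η x ^ (2 * l) * (1 + pd 0 u x ^ 2) ^ s := by
      simp only [hLHS, hψ]
      rw [Real.rpow_add_one hG0.ne']
      ring
    have k9 : LHS x = η x ^ (2 * l) * (1 + (pd 0 u x) ^ 2) ^ (s + 1) := rfl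
    have k10 : RHS x = η x ^ (2 * l) * (1 + (pd 0 u x) ^ 2) ^ q := rfl
    have k11 : Q x = (δ + deriv (deriv f₁) (pd 0 u x)) * pd 0 (pd 0 u) x * pd 0 φ x +
      (δ + deriv (deriv f₂) (pd 1 u x)) * pd 1 (pd 0 u) x * pd 1 φ x := rfl
    rw [← k9] at y1 y2 y3
    rw [← hC2, mul_add] at k5
    rw [k11, k10]
    rw [hC3, add_mul] at y3
    rw [hC1]
    linarith
  have hfin : volume Ω ≠ ⊤ := hΩb.measure_lt_top.ne
  have hJ : 0 ≤ ∫ x in Ω, RHS x := setIntegral_nonneg hΩo.measurableSet (fun x _ => by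
    have := hη0 x
    simp only [hRHS]; positivity)
  have hmono : ∫ x in Ω, (LHS x - (pd 0 u x * ψ x + u x * pd 0 ψ x) - Q x) ≤
      ∫ x in Ω, (C1 + (1 / 2 * LHS x + C2 * RHS x)) := by
    refine setIntegral_mono_on ?_ ?_ hΩo.measurableSet hpt
    · exact ((iL.sub (i2.add i1)).sub iQ).integrableOn
    · exact (integrableOn_const hfin).add
        ((iL.const_mul _).add (iR.const_mul _)).integrableOn
  have iC : Integrable (fun _ : EuclideanSpace ℝ (Fin 2) => C1) (volume.restrict Ω) :=
    integrableOn_const hfin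
  have iS : Integrable (fun x => 1 / 2 * LHS x + C2 * RHS x) (volume.restrict Ω) :=
    ((iL.const_mul _).add (iR.const_mul _)).integrableOn
  have hcomp : ∫ x in Ω, (C1 + (1 / 2 * LHS x + C2 * RHS x)) =
      C1 * V + (1 / 2 * (∫ x in Ω, LHS x) + C2 * ∫ x in Ω, RHS x) := by
    rw [integral_add iC iS,
      integral_add (iL.const_mul _).integrableOn (iR.const_mul _).integrableOn,
      integral_const_mul, integral_const_mul, setIntegral_const, smul_eq_mul]
    ring
  rw [eL, hcomp] at hmono
  have p1 : 0 ≤ C1 * V * ∫ x in Ω, RHS x := by positivity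
  have p2 : 0 ≤ C2 * ∫ x in Ω, RHS x := by positivity
  nlinarith
end
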